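/- Let 1/2 < s < 1. Then there exists C > 0 such that for all nonnegative sequences ω⁽¹⁾, ω⁽²⁾, ω⁽³⁾ : ℤ → [0,∞): ( Σ_{n ∈ ℤ} ⟨n⟩^{2s} ( Σ_{(n₁,n₂,n₃) ∈ ℤ³ : n₁ − n₂ + n₃ = n, n₂ ≠ n₁, n₂ ≠ n₃} |n₂| ⟨φ⟩^{−1/2} ω⁽¹⁾_{n₁} ω⁽²⁾_{n₂} ω⁽³⁾_{n₃} )² )^{1/2} ≤ C ‖ω⁽¹⁾‖_{ℓ²_s} ‖ω⁽²⁾‖_{ℓ²_s} ‖ω⁽³⁾‖_{ℓ²_s}. -/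

import Mathlib

open scoped ENNReal NNReal

/-- `⟨x⟩ = (1+x²)^{1/2}`. -/
noncomputable def jbR (x : ℝ) : ℝ := Real.sqrt (1 + x ^ 2)

/-- The weighted `ℓ²_s(ℤ)` norm (valued in `[0,∞]`). -/
noncomputable def l2sZ (s : ℝ) (ω : ℤ → ℝ≥0) : ℝ≥0∞ :=
  (∑' n : ℤ, ENNReal.ofReal (jbR (n : ℝ) ^ (2 * s)) * ((ω n : ℝ≥0∞)) ^ 2) ^ (1/2 : ℝ)

/-- The phase `φ = 2(n₂-n₁)(n₂-n₃)` of the cubic derivative NLS. -/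
def phiDNLS (n₁ n₂ n₃ : ℤ) : ℤ := 2 * (n₂ - n₁) * (n₂ - n₃)

lemma jb_one_le (x : ℝ) : 1 ≤ jbR x := by
  unfold jbR
  exact Real.one_le_sqrt.mpr (by nlinarith [sq_nonneg x])

lemma jb_pos (x : ℝ) : 0 < jbR x := lt_of_lt_of_le one_pos (jb_one_le x)

lemma jb_sq (x : ℝ) : jbR x ^ 2 = 1 + x ^ 2 := by
  unfold jbR
  exact Real.sq_sqrt (by positivity)

lemma jb_neg (x : ℝ) : jbR (-x) = jbR x := by simp [jbR]

lemma abs_le_jb (x : ℝ) : |x| ≤ jbR x :=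
  abs_le_of_sq_le_sq (by rw [jb_sq]; linarith) (jb_pos x).le

lemma jb_add (x y : ℝ) : jbR (x + y) ≤ jbR x + jbR y := by
  have hx := jb_pos x
  have hy := jb_pos y
  have h1 := abs_le_jb x
  have h2 := abs_le_jb y
  have h3 : x * y ≤ jbR x * jbR y := by
    calc x * y ≤ |x * y| := le_abs_self _
      _ = |x| * |y| := abs_mul _ _
      _ ≤ _ := mul_le_mul h1 h2 (abs_nonneg _) hx.le
  apply le_of_sq_le_sq _ (by positivity)
  rw [jb_sq]
  nlinarith [jb_sq x, jb_sq y]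

lemma radd {x y α : ℝ} (hx : 0 ≤ x) (hy : 0 ≤ y) (h0 : 0 ≤ α) (h1 : α ≤ 1) :
    (x + y) ^ α ≤ x ^ α + y ^ α := by
  have := NNReal.rpow_add_le_add_rpow ⟨x, hx⟩ ⟨y, hy⟩ h0 h1
  exact_mod_cast this

lemma jb_rpow_add (x y : ℝ) {α : ℝ} (h0 : 0 ≤ α) (h1 : α ≤ 1) :
    jbR (x + y) ^ α ≤ jbR x ^ α + jbR y ^ α :=
  (Real.rpow_le_rpow (jb_pos _).le (jb_add x y) h0).trans
    (radd (jb_pos x).le (jb_pos y).le h0 h1)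

lemma jb_phase (a b : ℤ) (ha : a ≠ 0) (hb : b ≠ 0) :
    jbR (a : ℝ) * jbR (b : ℝ) ≤ jbR (((2 * a * b : ℤ)) : ℝ) := by
  have h (c : ℤ) (hc : c ≠ 0) : jbR (c : ℝ) ^ 2 ≤ 2 * (c : ℝ) ^ 2 := by
    rw [jb_sq]
    have : (1 : ℝ) ≤ (c : ℝ) ^ 2 := by
      have : 0 < c ^ 2 := by positivity
      exact_mod_cast this
    linarith
  apply le_of_sq_le_sq _ (jb_pos _).le
  rw [jb_sq, mul_pow]
  push_cast
  have := mul_le_mul (h a ha) (h b hb) (by positivity) (by positivity)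
  nlinarith

/-- The one-variable kernel. -/
noncomputable def Gk (β α : ℝ) (n m : ℤ) : ℝ :=
  jbR (n : ℝ) ^ α * jbR (m : ℝ) ^ (-β) * jbR ((m : ℝ) - n) ^ (-α)

lemma Gk_nonneg (β α : ℝ) (n m : ℤ) : 0 ≤ Gk β α n m := by
  unfold Gk
  have := jb_pos (n : ℝ)
  have := jb_pos (m : ℝ)
  have := jb_pos ((m : ℝ) - n)
  positivity

lemma interp {x y α β : ℝ} (hx : 0 < x) (hy : 0 < y) (h0 : 0 ≤ α) (h : α ≤ β) :
    x ^ (α - β) * y ^ (-α) ≤ x ^ (-β) + y ^ (-β) := by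
  rcases le_total x y with hxy | hxy
  · have h1 : y ^ (-α) ≤ x ^ (-α) := Real.rpow_le_rpow_of_nonpos hx hxy (by linarith)
    calc x ^ (α - β) * y ^ (-α) ≤ x ^ (α - β) * x ^ (-α) := by gcongr
      _ = x ^ (-β) := by rw [← Real.rpow_add hx]; congr 1; ring
      _ ≤ _ := by have : 0 < y ^ (-β) := by positivity
                  linarith
  · have h1 : x ^ (α - β) ≤ y ^ (α - β) := Real.rpow_le_rpow_of_nonpos hy hxy (by linarith)
    calc x ^ (α - β) * y ^ (-α) ≤ y ^ (α - β) * y ^ (-α) := by gcongr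
      _ = y ^ (-β) := by rw [← Real.rpow_add hy]; congr 1; ring
      _ ≤ _ := by have : 0 < x ^ (-β) := by positivity
                  linarith

lemma Gk_le {β α : ℝ} (h0 : 0 ≤ α) (h1 : α ≤ 1) (h : α ≤ β) (n m : ℤ) :
    Gk β α n m ≤ 2 * jbR (m : ℝ) ^ (-β) + jbR (((m - n : ℤ)) : ℝ) ^ (-β) := by
  unfold Gk
  push_cast
  have e : (n : ℝ) = m + (-((m : ℝ) - n)) := by ring
  have h2 := jb_rpow_add (m : ℝ) (-((m : ℝ) - n)) h0 h1
  rw [← e, jb_neg] at h2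
  have hx := jb_pos (m : ℝ)
  have hy := jb_pos ((m : ℝ) - n)
  have h3 := interp hx hy h0 h
  set x := jbR (m : ℝ)
  set y := jbR ((m : ℝ) - n)
  have e1 : x ^ α * x ^ (-β) * y ^ (-α) = x ^ (α - β) * y ^ (-α) := by
    rw [← Real.rpow_add hx]; rfl
  have e2 : y ^ α * x ^ (-β) * y ^ (-α) = x ^ (-β) := by
    have : y ^ α * y ^ (-α) = 1 := by rw [← Real.rpow_add hy]; simp
    calc _ = x ^ (-β) * (y ^ α * y ^ (-α)) := by ring
      _ = _ := by rw [this, mul_one]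
  calc jbR (n : ℝ) ^ α * x ^ (-β) * y ^ (-α) ≤ (x ^ α + y ^ α) * x ^ (-β) * y ^ (-α) := by
        gcongr
    _ = x ^ α * x ^ (-β) * y ^ (-α) + y ^ α * x ^ (-β) * y ^ (-α) := by ring
    _ ≤ _ := by rw [e1, e2]; linarith

/-- The constant. -/
noncomputable def Zk (β : ℝ) : ℝ≥0∞ := ∑' m : ℤ, ENNReal.ofReal (jbR (m : ℝ) ^ (-β))

lemma Zk_ne_top {β : ℝ} (hβ : 1 < β) : Zk β ≠ ∞ := by
  have hs : Summable fun m : ℤ => |(m : ℝ)| ^ (-β) + (if m = 0 then (1 : ℝ) else 0) :=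
    (Real.summable_abs_int_rpow hβ).add (hasSum_ite_eq 0 1).summable
  have hs2 : Summable fun m : ℤ => jbR (m : ℝ) ^ (-β) := by
    refine Summable.of_nonneg_of_le (fun m => (Real.rpow_pos_of_pos (jb_pos _) _).le) ?_ hs
    intro m
    by_cases hm : m = 0
    · subst hm
      have : (0 : ℝ) ≤ |((0 : ℤ) : ℝ)| ^ (-β) := by positivity
      have h2 : jbR ((0 : ℤ) : ℝ) = 1 := by simp [jbR]
      rw [h2]
      simpa using this
    · simp only [hm, if_false, add_zero]
      refine Real.rpow_le_rpow_of_nonpos ?_ (abs_le_jb _) (by linarith)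
      exact abs_pos.mpr (by exact_mod_cast hm)
  exact hs2.tsum_ofReal_ne_top

lemma Gk_sum {β α : ℝ} (h0 : 0 ≤ α) (h1 : α ≤ 1) (h : α ≤ β) (n : ℤ) :
    ∑' m : ℤ, ENNReal.ofReal (Gk β α n m) ≤ 3 * Zk β := by
  calc ∑' m : ℤ, ENNReal.ofReal (Gk β α n m)
      ≤ ∑' m : ℤ, (2 * ENNReal.ofReal (jbR (m : ℝ) ^ (-β))
          + ENNReal.ofReal (jbR (((m - n : ℤ)) : ℝ) ^ (-β))) := by
        refine ENNReal.tsum_le_tsum fun m => ?_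
        refine (ENNReal.ofReal_le_ofReal (Gk_le h0 h1 h n m)).trans ?_
        refine ENNReal.ofReal_add_le.trans ?_
        rw [ENNReal.ofReal_mul (by norm_num)]
        simp
    _ = 2 * Zk β + ∑' m : ℤ, ENNReal.ofReal (jbR (((m - n : ℤ)) : ℝ) ^ (-β)) := by
        rw [ENNReal.tsum_add, ENNReal.tsum_mul_left]; rfl
    _ = 2 * Zk β + Zk β := by
        congr 1
        exact (Equiv.subRight n).tsum_eq (fun m : ℤ => ENNReal.ofReal (jbR (m : ℝ) ^ (-β)))
    _ = 3 * Zk β := by ring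

lemma kernel_le {s : ℝ} (hs : 1/2 < s) (hs' : s < 1) (n₁ n₂ n₃ n : ℤ)
    (hn : n₁ - n₂ + n₃ = n) (h1 : n₂ ≠ n₁) (h3 : n₂ ≠ n₃) :
    jbR (n : ℝ) ^ (2 * s) * ((|n₂| : ℝ) * jbR ((phiDNLS n₁ n₂ n₃ : ℤ) : ℝ) ^ (-(1/2) : ℝ) *
      (jbR (n₁ : ℝ) ^ (-s) * jbR (n₂ : ℝ) ^ (-s) * jbR (n₃ : ℝ) ^ (-s))) ^ 2
    ≤ Gk (2 * s) 1 n n₁ * Gk (2 * s) 1 n n₃ + Gk (2 * s) 1 n n₁ * Gk (2 * s) (2 * s - 1) n n₃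
      + Gk (2 * s) (2 * s - 1) n n₁ * Gk (2 * s) 1 n n₃ := by
  have hph := jb_phase (n₂ - n₁) (n₂ - n₃) (sub_ne_zero.mpr h1) (sub_ne_zero.mpr h3)
  have hphi : phiDNLS n₁ n₂ n₃ = 2 * (n₂ - n₁) * (n₂ - n₃) := rfl
  rw [← hphi] at hph
  have ea : (((n₂ - n₁ : ℤ)) : ℝ) = (n₃ : ℝ) - n := by rw [← hn]; push_cast; ring
  have eb : (((n₂ - n₃ : ℤ)) : ℝ) = (n₁ : ℝ) - n := by rw [← hn]; push_cast; ring
  rw [ea, eb] at hph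
  have hn2 : (n₂ : ℝ) = n + ((n₃ : ℝ) - n) + ((n₁ : ℝ) - n) := by rw [← hn]; push_cast; ring
  have hr0 : 0 ≤ 2 - 2 * s := by linarith
  have hr1 : 2 - 2 * s ≤ 1 := by linarith
  have hsum : jbR (n₂ : ℝ) ^ (2 - 2 * s) ≤ jbR (n : ℝ) ^ (2 - 2 * s)
      + jbR ((n₃ : ℝ) - n) ^ (2 - 2 * s) + jbR ((n₁ : ℝ) - n) ^ (2 - 2 * s) := by
    rw [hn2]
    refine (jb_rpow_add _ _ hr0 hr1).trans ?_
    have := jb_rpow_add (n : ℝ) ((n₃ : ℝ) - n) hr0 hr1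
    linarith
  have habs := abs_le_jb (n₂ : ℝ)
  unfold Gk
  have pn := jb_pos (n : ℝ)
  have p1 := jb_pos (n₁ : ℝ)
  have p2 := jb_pos (n₂ : ℝ)
  have p3 := jb_pos (n₃ : ℝ)
  have pa := jb_pos ((n₃ : ℝ) - n)
  have pb := jb_pos ((n₁ : ℝ) - n)
  have pp := jb_pos ((phiDNLS n₁ n₂ n₃ : ℤ) : ℝ)
  set N := jbR (n : ℝ)
  set x₁ := jbR (n₁ : ℝ)
  set x₂ := jbR (n₂ : ℝ)
  set x₃ := jbR (n₃ : ℝ)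
  set a := jbR ((n₃ : ℝ) - n)
  set b := jbR ((n₁ : ℝ) - n)
  set P := jbR ((phiDNLS n₁ n₂ n₃ : ℤ) : ℝ)
  have sqr (x : ℝ) (hx : 0 < x) (r : ℝ) : (x ^ r) ^ 2 = x ^ (2 * r) := by
    rw [← Real.rpow_natCast (x ^ r) 2, ← Real.rpow_mul hx.le]; congr 1; push_cast; ring
  have hP : P ^ (-1 : ℝ) ≤ a ^ (-1 : ℝ) * b ^ (-1 : ℝ) := by
    rw [← Real.mul_rpow pa.le pb.le]
    exact Real.rpow_le_rpow_of_nonpos (by positivity) hph (by norm_num)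
  have m1 : N ^ (2 * s) * N ^ (2 - 2 * s) = N ^ (1 : ℝ) * N ^ (1 : ℝ) := by
    rw [← Real.rpow_add pn, ← Real.rpow_add pn]; congr 1; ring
  have m2 : N ^ (2 * s) = N ^ (1 : ℝ) * N ^ (2 * s - 1) := by
    rw [← Real.rpow_add pn]; congr 1; ring
  have m3 (y : ℝ) (hy : 0 < y) : y ^ (2 - 2 * s) * y ^ (-1 : ℝ) = y ^ (-(2 * s - 1)) := by
    rw [← Real.rpow_add hy]; congr 1; ring
  have m4 : x₂ ^ 2 * x₂ ^ (-(2 * s)) = x₂ ^ (2 - 2 * s) := by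
    rw [← Real.rpow_natCast x₂ 2, ← Real.rpow_add p2]; congr 1
  have e2s : 2 * (-s) = -(2 * s) := by ring
  calc N ^ (2 * s) * (|(n₂ : ℝ)| * P ^ (-(1/2) : ℝ) * (x₁ ^ (-s) * x₂ ^ (-s) * x₃ ^ (-s))) ^ 2
      = N ^ (2 * s) * (|(n₂ : ℝ)| ^ 2 * P ^ (-1 : ℝ)
        * (x₁ ^ (-(2 * s)) * x₂ ^ (-(2 * s)) * x₃ ^ (-(2 * s)))) := by
        simp only [mul_pow]
        rw [sqr P pp, sqr x₁ p1, sqr x₂ p2, sqr x₃ p3, e2s]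
        norm_num
    _ ≤ N ^ (2 * s) * (x₂ ^ 2 * (a ^ (-1 : ℝ) * b ^ (-1 : ℝ))
        * (x₁ ^ (-(2 * s)) * x₂ ^ (-(2 * s)) * x₃ ^ (-(2 * s)))) := by
        gcongr
    _ = N ^ (2 * s) * (x₂ ^ 2 * x₂ ^ (-(2 * s))) * (a ^ (-1 : ℝ) * b ^ (-1 : ℝ)
        * (x₁ ^ (-(2 * s)) * x₃ ^ (-(2 * s)))) := by ring
    _ ≤ N ^ (2 * s) * (N ^ (2 - 2 * s) + a ^ (2 - 2 * s) + b ^ (2 - 2 * s))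
        * (a ^ (-1 : ℝ) * b ^ (-1 : ℝ) * (x₁ ^ (-(2 * s)) * x₃ ^ (-(2 * s)))) := by
        rw [m4]; gcongr
    _ = (N ^ (2 * s) * N ^ (2 - 2 * s))
          * (a ^ (-1 : ℝ) * b ^ (-1 : ℝ) * (x₁ ^ (-(2 * s)) * x₃ ^ (-(2 * s))))
        + N ^ (2 * s) * ((a ^ (2 - 2 * s) * a ^ (-1 : ℝ)) * b ^ (-1 : ℝ)
          * (x₁ ^ (-(2 * s)) * x₃ ^ (-(2 * s))))
        + N ^ (2 * s) * ((b ^ (2 - 2 * s) * b ^ (-1 : ℝ)) * a ^ (-1 : ℝ)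
          * (x₁ ^ (-(2 * s)) * x₃ ^ (-(2 * s)))) := by ring
    _ = _ := by
        rw [m1, m3 a pa, m3 b pb, m2]; ring

lemma cs_tsum {ι : Type*} (f g : ι → ℝ≥0∞) :
    (∑' i, f i * g i) ^ 2 ≤ (∑' i, f i ^ 2) * (∑' i, g i ^ 2) := by
  have h : ∑' i, f i * g i ≤ ((∑' i, f i ^ 2) * (∑' i, g i ^ 2)) ^ (1/2 : ℝ) := by
    rw [ENNReal.tsum_eq_iSup_sum]
    refine iSup_le fun t => ?_
    refine (ENNReal.inner_le_Lp_mul_Lq t f g Real.HolderConjugate.two_two).trans ?_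
    rw [ENNReal.mul_rpow_of_nonneg _ _ (by norm_num)]
    simp only [ENNReal.rpow_two]
    gcongr
    · exact ENNReal.sum_le_tsum t
    · exact ENNReal.sum_le_tsum t
  calc _ ≤ (((∑' i, f i ^ 2) * (∑' i, g i ^ 2)) ^ (1/2 : ℝ)) ^ 2 := by gcongr
    _ = _ := by
      rw [← ENNReal.rpow_two, ← ENNReal.rpow_mul]; norm_num

lemma tsum_prod_mul {ι κ : Type*} (f : ι → ℝ≥0∞) (g : κ → ℝ≥0∞) :
    ∑' p : ι × κ, f p.1 * g p.2 = (∑' i, f i) * ∑' k, g k := by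
  rw [ENNReal.tsum_prod (f := fun a b => f a * g b)]
  simp_rw [ENNReal.tsum_mul_left, ENNReal.tsum_mul_right]

/-- Index set. -/
abbrev Idx (n : ℤ) := {q : ℤ × ℤ × ℤ // q.1 - q.2.1 + q.2.2 = n ∧ q.2.1 ≠ q.1 ∧ q.2.1 ≠ q.2.2}

/-- Kernel entry. -/
noncomputable def Fk (s : ℝ) (q : ℤ × ℤ × ℤ) : ℝ :=
  (|q.2.1| : ℝ) * jbR ((phiDNLS q.1 q.2.1 q.2.2 : ℤ) : ℝ) ^ (-(1/2) : ℝ) *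
      (jbR (q.1 : ℝ) ^ (-s) * jbR (q.2.1 : ℝ) ^ (-s) * jbR (q.2.2 : ℝ) ^ (-s))

lemma Fk_sum {s : ℝ} (hs : 1/2 < s) (hs' : s < 1) (n : ℤ) :
    ENNReal.ofReal (jbR (n : ℝ) ^ (2 * s)) * ∑' p : Idx n, ENNReal.ofReal (Fk s p.1) ^ 2
      ≤ 27 * Zk (2 * s) ^ 2 := by
  set A : ℤ → ℝ≥0∞ := fun m => ENNReal.ofReal (Gk (2 * s) 1 n m)
  set B : ℤ → ℝ≥0∞ := fun m => ENNReal.ofReal (Gk (2 * s) (2 * s - 1) n m)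
  have hA : ∑' m, A m ≤ 3 * Zk (2 * s) := Gk_sum (by norm_num) le_rfl (by linarith) n
  have hB : ∑' m, B m ≤ 3 * Zk (2 * s) := Gk_sum (by linarith) (by linarith) (by linarith) n
  have hinj : Function.Injective (fun p : Idx n => (p.1.1, p.1.2.2)) := by
    rintro ⟨⟨a, b, c⟩, h, _⟩ ⟨⟨a', b', c'⟩, h', _⟩ e
    simp only [Prod.mk.injEq] at e
    obtain ⟨rfl, rfl⟩ := e
    simp only at h h'
    have : b = b' := by omega
    subst this
    rfl
  rw [← ENNReal.tsum_mul_left]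
  calc _ ≤ ∑' p : Idx n, (fun z : ℤ × ℤ => A z.1 * A z.2 + A z.1 * B z.2 + B z.1 * A z.2)
          (p.1.1, p.1.2.2) := by
        refine ENNReal.tsum_le_tsum fun p => ?_
        obtain ⟨⟨n₁, n₂, n₃⟩, hn, h1, h3⟩ := p
        have hk := kernel_le hs hs' n₁ n₂ n₃ n hn h1 h3
        have hF : 0 ≤ Fk s (n₁, n₂, n₃) := by
          unfold Fk
          have := jb_pos (n₁ : ℝ)
          have := jb_pos (n₂ : ℝ)
          have := jb_pos (n₃ : ℝ)
          have := jb_pos ((phiDNLS n₁ n₂ n₃ : ℤ) : ℝ)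
          positivity
        have gn := Gk_nonneg (2 * s)
        rw [← ENNReal.ofReal_pow hF,
          ← ENNReal.ofReal_mul (Real.rpow_nonneg (jb_pos _).le _)]
        refine (ENNReal.ofReal_le_ofReal hk).trans (le_of_eq ?_)
        simp only [A, B]
        rw [ENNReal.ofReal_add (add_nonneg (mul_nonneg (gn _ _ _) (gn _ _ _))
            (mul_nonneg (gn _ _ _) (gn _ _ _))) (mul_nonneg (gn _ _ _) (gn _ _ _)),
          ENNReal.ofReal_add (mul_nonneg (gn _ _ _) (gn _ _ _)) (mul_nonneg (gn _ _ _) (gn _ _ _)),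
          ENNReal.ofReal_mul (gn _ _ _), ENNReal.ofReal_mul (gn _ _ _),
          ENNReal.ofReal_mul (gn _ _ _)]
    _ ≤ ∑' z : ℤ × ℤ, (A z.1 * A z.2 + A z.1 * B z.2 + B z.1 * A z.2) :=
        ENNReal.tsum_comp_le_tsum_of_injective hinj _
    _ = (∑' m, A m) * (∑' m, A m) + (∑' m, A m) * (∑' m, B m) + (∑' m, B m) * (∑' m, A m) := by
        rw [ENNReal.tsum_add, ENNReal.tsum_add, tsum_prod_mul, tsum_prod_mul, tsum_prod_mul]
    _ ≤ (3 * Zk (2 * s)) * (3 * Zk (2 * s)) + (3 * Zk (2 * s)) * (3 * Zk (2 * s))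
        + (3 * Zk (2 * s)) * (3 * Zk (2 * s)) := by gcongr
    _ = _ := by ring

/-- Weighted square. -/
noncomputable def gk (s : ℝ) (ω : ℤ → ℝ≥0) (n : ℤ) : ℝ≥0∞ :=
  ENNReal.ofReal (jbR (n : ℝ) ^ (2 * s)) * ((ω n : ℝ≥0∞)) ^ 2

/-- Weighted value. -/
noncomputable def hk (s : ℝ) (ω : ℤ → ℝ≥0) (n : ℤ) : ℝ≥0∞ :=
  ENNReal.ofReal (jbR (n : ℝ) ^ s) * (ω n : ℝ≥0∞)

lemma hk_sq (s : ℝ) (ω : ℤ → ℝ≥0) (n : ℤ) : hk s ω n ^ 2 = gk s ω n := by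
  unfold hk gk
  have h := jb_pos (n : ℝ)
  rw [mul_pow, ← ENNReal.ofReal_pow (Real.rpow_nonneg h.le _), ← Real.rpow_natCast,
    ← Real.rpow_mul h.le, mul_comm s]
  norm_num

lemma hk_cancel (s : ℝ) (ω : ℤ → ℝ≥0) (n : ℤ) :
    ENNReal.ofReal (jbR (n : ℝ) ^ (-s)) * hk s ω n = ω n := by
  unfold hk
  have h := jb_pos (n : ℝ)
  rw [← mul_assoc, ← ENNReal.ofReal_mul (Real.rpow_nonneg h.le _), ← Real.rpow_add h]
  simp

lemma H_sum (s : ℝ) (ω₁ ω₂ ω₃ : ℤ → ℝ≥0) :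
    ∑' n : ℤ, ∑' p : Idx n, (hk s ω₁ p.1.1 * hk s ω₂ p.1.2.1 * hk s ω₃ p.1.2.2) ^ 2
      ≤ (∑' n, gk s ω₁ n) * (∑' n, gk s ω₂ n) * (∑' n, gk s ω₃ n) := by
  rw [← ENNReal.tsum_sigma (fun (n : ℤ) (p : Idx n) =>
    (hk s ω₁ p.1.1 * hk s ω₂ p.1.2.1 * hk s ω₃ p.1.2.2) ^ 2)]
  have hinj : Function.Injective (fun p : (Σ n : ℤ, Idx n) => p.2.1) := by
    rintro ⟨n, q, h, h'⟩ ⟨m, q', k, k'⟩ e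
    simp only at e
    subst e
    subst h
    subst k
    rfl
  calc _ = ∑' p : (Σ n : ℤ, Idx n),
          (fun q : ℤ × ℤ × ℤ => gk s ω₁ q.1 * (gk s ω₂ q.2.1 * gk s ω₃ q.2.2)) p.2.1 := by
        refine tsum_congr fun p => ?_
        simp only [mul_pow, hk_sq, mul_assoc]
    _ ≤ ∑' q : ℤ × ℤ × ℤ, gk s ω₁ q.1 * (gk s ω₂ q.2.1 * gk s ω₃ q.2.2) :=
        ENNReal.tsum_comp_le_tsum_of_injective hinj _
    _ = _ := by
        rw [tsum_prod_mul (gk s ω₁) (fun z : ℤ × ℤ => gk s ω₂ z.1 * gk s ω₃ z.2),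
          tsum_prod_mul, mul_assoc]

/-- The fundamental estimate (A1) for the gauged derivative NLS:
for `1/2 < s < 1`, the trilinear form with multiplier `|n₂| ⟨φ⟩^{-1/2}` is bounded in
`ℓ²_s` by `C ∏ ‖ω⁽ʲ⁾‖_{ℓ²_s}`. -/
theorem DNLS_A1 (s : ℝ) (hs : 1/2 < s) (hs' : s < 1) :
    ∃ C : ℝ, 0 < C ∧
      ∀ (ω₁ ω₂ ω₃ : ℤ → ℝ≥0),
        (∑' n : ℤ, ENNReal.ofReal (jbR (n : ℝ) ^ (2 * s)) *
            (∑' p : {q : ℤ × ℤ × ℤ //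
                q.1 - q.2.1 + q.2.2 = n ∧ q.2.1 ≠ q.1 ∧ q.2.1 ≠ q.2.2},
              ENNReal.ofReal ((|p.1.2.1| : ℝ) *
                  jbR ((phiDNLS p.1.1 p.1.2.1 p.1.2.2 : ℤ) : ℝ) ^ (-(1/2) : ℝ)) *
                (ω₁ p.1.1 : ℝ≥0∞) * (ω₂ p.1.2.1 : ℝ≥0∞) * (ω₃ p.1.2.2 : ℝ≥0∞)) ^ 2) ^ (1/2 : ℝ)
          ≤ ENNReal.ofReal C * (l2sZ s ω₁ * l2sZ s ω₂ * l2sZ s ω₃) := by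
  have hZ : Zk (2 * s) ≠ ∞ := Zk_ne_top (by linarith)
  set K : ℝ≥0∞ := 27 * Zk (2 * s) ^ 2 with hK
  have hKt : K ≠ ∞ := ENNReal.mul_ne_top (by norm_num) (ENNReal.pow_ne_top hZ)
  have hKt2 : K ^ (1/2 : ℝ) ≠ ∞ := ENNReal.rpow_ne_top_of_nonneg (by norm_num) hKt
  refine ⟨(K ^ (1/2 : ℝ)).toReal + 1, by positivity, fun ω₁ ω₂ ω₃ => ?_⟩
  have hC : K ^ (1/2 : ℝ) ≤ ENNReal.ofReal ((K ^ (1/2 : ℝ)).toReal + 1) := by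
    rw [ENNReal.le_ofReal_iff_toReal_le hKt2 (by positivity)]
    linarith
  have hT (n : ℤ) (p : Idx n) :
      ENNReal.ofReal ((|p.1.2.1| : ℝ) *
          jbR ((phiDNLS p.1.1 p.1.2.1 p.1.2.2 : ℤ) : ℝ) ^ (-(1/2) : ℝ)) *
        (ω₁ p.1.1 : ℝ≥0∞) * (ω₂ p.1.2.1 : ℝ≥0∞) * (ω₃ p.1.2.2 : ℝ≥0∞)
      = ENNReal.ofReal (Fk s p.1) * (hk s ω₁ p.1.1 * hk s ω₂ p.1.2.1 * hk s ω₃ p.1.2.2) := by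
    have q1 := Real.rpow_nonneg (jb_pos (p.1.1 : ℝ)).le (-s)
    have q2 := Real.rpow_nonneg (jb_pos (p.1.2.1 : ℝ)).le (-s)
    have q0 := Real.rpow_nonneg (jb_pos ((phiDNLS p.1.1 p.1.2.1 p.1.2.2 : ℤ) : ℝ)).le (-(1/2) : ℝ)
    unfold Fk
    rw [ENNReal.ofReal_mul (mul_nonneg (abs_nonneg _) q0), ENNReal.ofReal_mul (mul_nonneg q1 q2),
      ENNReal.ofReal_mul q1]
    conv_lhs => rw [← hk_cancel s ω₁, ← hk_cancel s ω₂, ← hk_cancel s ω₃]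
    ring
  calc _ ≤ (K * ((∑' n, gk s ω₁ n) * (∑' n, gk s ω₂ n) * (∑' n, gk s ω₃ n))) ^ (1/2 : ℝ) := by
        refine ENNReal.rpow_le_rpow ?_ (by norm_num)
        refine le_trans ?_ (mul_le_mul_right (H_sum s ω₁ ω₂ ω₃) K)
        rw [← ENNReal.tsum_mul_left]
        refine ENNReal.tsum_le_tsum fun n => ?_
        rw [tsum_congr (hT n)]
        refine (mul_le_mul_right (cs_tsum _ _) _).trans ?_
        rw [← mul_assoc]
        exact mul_le_mul_left (Fk_sum hs hs' n) _
    _ = K ^ (1/2 : ℝ) * (l2sZ s ω₁ * l2sZ s ω₂ * l2sZ s ω₃) := by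
        simp only [ENNReal.mul_rpow_of_nonneg _ _ (show (0 : ℝ) ≤ 1/2 by norm_num)]
        rfl
    _ ≤ _ := by gcongr
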